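/- Let f : ℝ^D → ℝ^H be piecewise affine with respect to a finite cover of ℝ^D by convex sets Q_1, …, Q_R, with affine pieces f(x) = V_l x + a_l on Q_l, and let x ∈ ℝ^D satisfy V_l x ≠ 0 for every l. Let ℓ > 0, let κ(u, v) = (1 + √3·‖u − v‖/ℓ)·exp(−√3·‖u − v‖/ℓ) be the Matern-3/2 kernel, fix inducing points φ_1, …, φ_K ∈ ℝ^H and a matrix C ∈ ℝ^{K×K}, and define σ(z) = κ(z, z) − Σ_{k,k'=1}^K κ(z, φ_k) C_{k k'} κ(z, φ_{k'}). Then σ(f(δ·x)) → κ(0, 0) = 1 as δ → ∞. -/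

import Mathlib

open Filter

/-!
On the piece containing `δ • x` the encoder equals `δ • V l x + a l`, which leaves every bounded set
as `δ → ∞` because `V l x ≠ 0`. As there are finitely many pieces, `f (δ • x)` leaves every bounded
set no matter how the ray moves between them. The kernel decays at infinity, so the correction
`∑ κ(z, φ k) C k k' κ(z, φ k')` vanishes in the limit and only the prior variance `κ(z, z)` remains.
-/

open Bornology (cobounded)
open scoped Topology

section Filters

variable {ι α β : Type*} {l : Filter α} {l' : Filter β}

theorem tendsto_of_eventually_exists_eq [Finite ι] {f : α → β} {g : ι → α → β}
    (hg : ∀ i, Tendsto (g i) l l') (hfg : ∀ᶠ x in l, ∃ i, f x = g i x) :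
    Tendsto f l l' := by
  intro s hs
  have hmem : ∀ᶠ x in l, ∀ i, g i x ∈ s := eventually_all.mpr fun i ↦ hg i hs
  change ∀ᶠ x in l, f x ∈ s
  filter_upwards [hfg, hmem] with x ⟨i, hi⟩ hgs
  rw [hi]
  exact hgs i

end Filters

section PiecewiseAffine

variable {𝕜 E F : Type*} [NormedField 𝕜] [AddCommGroup E] [Module 𝕜 E]
  [NormedAddCommGroup F] [NormedSpace 𝕜 F]

theorem tendsto_smul_add_const_cobounded {v : F} (hv : v ≠ 0) (b : F) :
    Tendsto (fun δ : 𝕜 ↦ δ • v + b) (cobounded 𝕜) (cobounded F) := by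
  have hsmul : Tendsto (fun δ : 𝕜 ↦ δ • v) (cobounded 𝕜) (cobounded F) := by
    rw [← tendsto_norm_atTop_iff_cobounded]
    simpa only [norm_smul] using
      tendsto_norm_cobounded_atTop.atTop_mul_const (norm_pos_iff.mpr hv)
  exact (tendsto_add_const_cobounded b).comp hsmul

theorem tendsto_piecewise_affine_smul_cobounded {ι : Type*} [Finite ι]
    {V : ι → E →ₗ[𝕜] F} {a : ι → F} {f : E → F} (hf : ∀ y, ∃ i, f y = V i y + a i)
    {x : E} (hx : ∀ i, V i x ≠ 0) :
    Tendsto (fun δ : 𝕜 ↦ f (δ • x)) (cobounded 𝕜) (cobounded F) :=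
  tendsto_of_eventually_exists_eq (fun i ↦ tendsto_smul_add_const_cobounded (hx i) (a i)) <|
    .of_forall fun δ ↦ by simpa only [map_smul] using hf (δ • x)

end PiecewiseAffine

section PredictiveVariance

variable {Z m : Type*} [Fintype m]

/-- The Gaussian-process predictive variance at `z` with kernel `κ` and inducing points `φ`. The
matrix `C` is arbitrary; in exact regression it is the inverse of the (regularised) Gram matrix
of `φ`. -/
def predictiveVariance (κ : Z → Z → ℝ) (φ : m → Z) (C : Matrix m m ℝ) (z : Z) : ℝ :=
  κ z z - ∑ k, ∑ k', κ z (φ k) * C k k' * κ z (φ k')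

theorem tendsto_predictiveVariance {κ : Z → Z → ℝ} {φ : m → Z} {l : Filter Z} {c : ℝ}
    (hprior : Tendsto (fun z ↦ κ z z) l (𝓝 c)) (hdecay : ∀ k, Tendsto (κ · (φ k)) l (𝓝 0))
    (C : Matrix m m ℝ) : Tendsto (predictiveVariance κ φ C) l (𝓝 c) := by
  have hterm (k k' : m) : Tendsto (fun z ↦ κ z (φ k) * C k k' * κ z (φ k')) l (𝓝 0) := by
    simpa only [zero_mul] using ((hdecay k).mul_const (C k k')).mul (hdecay k')
  have hsum : Tendsto (fun z ↦ ∑ k, ∑ k', κ z (φ k) * C k k' * κ z (φ k')) l (𝓝 0) := by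
    simpa only [Finset.sum_const_zero] using
      tendsto_finsetSum _ fun k _ ↦ tendsto_finsetSum _ fun k' _ ↦ hterm k k'
  unfold predictiveVariance
  simpa only [sub_zero] using hprior.sub hsum

end PredictiveVariance

section Matern

variable {F : Type*} [SeminormedAddCommGroup F]

/-- The Matérn-3/2 kernel on a seminormed group, with lengthscale `ℓ`. It is meaningful for
`0 < ℓ`; at `ℓ = 0`, division by zero makes it constantly `1`. -/
noncomputable def matern32 (ℓ : ℝ) (u v : F) : ℝ :=
  (1 + √3 * ‖u - v‖ / ℓ) * Real.exp (-(√3 * ‖u - v‖ / ℓ))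

theorem matern32_self (ℓ : ℝ) (z : F) : matern32 ℓ z z = 1 := by
  simp [matern32]

theorem tendsto_one_add_mul_exp_neg_atTop_nhds_zero :
    Tendsto (fun t : ℝ ↦ (1 + t) * Real.exp (-t)) atTop (𝓝 0) := by
  simpa only [pow_zero, pow_one, ← add_mul, add_zero] using
    (Real.tendsto_pow_mul_exp_neg_atTop_nhds_zero 0).add
      (Real.tendsto_pow_mul_exp_neg_atTop_nhds_zero 1)

theorem tendsto_matern32_cobounded {ℓ : ℝ} (hℓ : 0 < ℓ) (w : F) :
    Tendsto (matern32 ℓ · w) (cobounded F) (𝓝 0) := by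
  have hdist : Tendsto (fun z : F ↦ ‖z - w‖) (cobounded F) atTop :=
    tendsto_norm_cobounded_atTop.comp (tendsto_sub_const_cobounded w)
  have hscaled : Tendsto (fun z : F ↦ √3 * ‖z - w‖ / ℓ) (cobounded F) atTop :=
    (hdist.const_mul_atTop (by positivity)).atTop_div_const hℓ
  exact tendsto_one_add_mul_exp_neg_atTop_nhds_zero.comp hscaled

end Matern

theorem dkl_matern32_variance_tendsto_prior_general {𝕜 E F ι m : Type*}
    [NormedField 𝕜] [AddCommGroup E] [Module 𝕜 E] [NormedAddCommGroup F] [NormedSpace 𝕜 F]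
    [Finite ι] [Fintype m] {V : ι → E →ₗ[𝕜] F} {a : ι → F} {f : E → F}
    (hf : ∀ y, ∃ i, f y = V i y + a i) {x : E} (hx : ∀ i, V i x ≠ 0)
    {ℓ : ℝ} (hℓ : 0 < ℓ) (φ : m → F) (C : Matrix m m ℝ) :
    Tendsto (fun δ : 𝕜 ↦ predictiveVariance (matern32 ℓ) φ C (f (δ • x)))
      (cobounded 𝕜) (𝓝 1) := by
  have hprior : Tendsto (fun z : F ↦ matern32 ℓ z z) (cobounded F) (𝓝 1) := by
    simp only [matern32_self, tendsto_const_nhds]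
  have hvariance : Tendsto (predictiveVariance (matern32 ℓ) φ C) (cobounded F) (𝓝 1) :=
    tendsto_predictiveVariance hprior (fun k ↦ tendsto_matern32_cobounded hℓ (φ k)) C
  exact hvariance.comp (tendsto_piecewise_affine_smul_cobounded hf hx)

/-- Theorem A.1 for the Matern-3/2 kernel: the deep kernel learning predictive
variance reverts to the prior variance `κ 0 0 = 1` along rays `δ • x` as `δ → ∞`. -/
theorem dkl_matern32_variance_tendsto_prior
    (D H R K : ℕ)
    (Q : Fin R → Set (EuclideanSpace ℝ (Fin D)))
    (V : Fin R → (EuclideanSpace ℝ (Fin D) →ₗ[ℝ] EuclideanSpace ℝ (Fin H)))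
    (a : Fin R → EuclideanSpace ℝ (Fin H))
    (f : EuclideanSpace ℝ (Fin D) → EuclideanSpace ℝ (Fin H))
    (hconv : ∀ l, Convex ℝ (Q l))
    (hcover : (⋃ l, Q l) = Set.univ)
    (hf : ∀ l, ∀ x ∈ Q l, f x = V l x + a l)
    (x : EuclideanSpace ℝ (Fin D))
    (hx : ∀ l, V l x ≠ 0)
    (ℓ : ℝ) (hℓ : 0 < ℓ)
    (κ : EuclideanSpace ℝ (Fin H) → EuclideanSpace ℝ (Fin H) → ℝ)
    (hκ : ∀ u v, κ u v =
      (1 + Real.sqrt 3 * ‖u - v‖ / ℓ) * Real.exp (-(Real.sqrt 3 * ‖u - v‖ / ℓ)))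
    (φ : Fin K → EuclideanSpace ℝ (Fin H))
    (C : Matrix (Fin K) (Fin K) ℝ)
    (σ : EuclideanSpace ℝ (Fin H) → ℝ)
    (hσ : ∀ z, σ z = κ z z - ∑ k : Fin K, ∑ k' : Fin K, κ z (φ k) * C k k' * κ z (φ k')) :
    Tendsto (fun δ : ℝ => σ (f (δ • x))) atTop (nhds (κ 0 0)) ∧ κ 0 0 = 1 := by
  obtain rfl : κ = matern32 ℓ := funext₂ hκ
  obtain rfl : σ = predictiveVariance (matern32 ℓ) φ C := funext hσ
  have hpiece (y) : ∃ l, f y = V l y + a l :=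
    (Set.iUnion_eq_univ_iff.mp hcover y).imp fun l ↦ hf l y
  rw [matern32_self]
  exact ⟨(dkl_matern32_variance_tendsto_prior_general hpiece hx hℓ φ C).mono_left
    IsOrderBornology.atTop_le_cobounded, rfl⟩
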